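/- arXiv:1804.00360 — 2 statements merged into one kernel-verified Lean document; each statement's English description precedes it below -/
import Mathlib

section
/- Let X be a finite set, let A, B, C_1, …, C_k ⊆ X be sets whose indicator vectors e_A, e_B, e_{C_1}, …, e_{C_k} ∈ ℝ^X are pairwise distinct, and suppose e_A − e_B = Σ_{i=1}^k γ_i (e_{C_i} − e_B) with γ_1, …, γ_k > 0. Then A ∩ B ⊆ C_i ⊆ A ∪ B for every i ∈ {1, …, k}. -/
variable {X : Type*} [Fintype X] [DecidableEq X]

/-- Indicator vector of a finite subset of `X`. -/
def indVec (A : Finset X) : X → ℝ := fun x => if x ∈ A then 1 else 0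

section OrderedModule

variable {ι R M : Type*} [Semiring R] [PartialOrder R] [AddCommGroup M] [PartialOrder M]
  [IsOrderedAddMonoid M] [Module R M] [PosSMulStrictMono R M]
  {s : Finset ι} {γ : ι → R} {c : ι → M} {b : M} {i : ι}

theorem eq_of_sum_smul_sub_eq_zero_of_le
    (hγ : ∀ j ∈ s, 0 ≤ γ j) (hb : ∀ j ∈ s, b ≤ c j)
    (hsum : ∑ j ∈ s, γ j • (c j - b) = 0) (hi : i ∈ s) (hγi : 0 < γ i) : c i = b := by
  have term_nonneg : ∀ j ∈ s, 0 ≤ γ j • (c j - b) := fun j hj =>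
    smul_nonneg (hγ j hj) (sub_nonneg.2 (hb j hj))
  have term_eq_zero : γ i • (c i - b) = 0 :=
    (Finset.sum_eq_zero_iff_of_nonneg term_nonneg).1 hsum i hi
  by_contra hne
  have hlt : b < c i := (hb i hi).lt_of_ne' hne
  exact (smul_pos hγi (sub_pos.2 hlt)).ne' term_eq_zero

theorem eq_of_sum_smul_sub_eq_zero_of_ge
    (hγ : ∀ j ∈ s, 0 ≤ γ j) (hb : ∀ j ∈ s, c j ≤ b)
    (hsum : ∑ j ∈ s, γ j • (c j - b) = 0) (hi : i ∈ s) (hγi : 0 < γ i) : c i = b := by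
  have hsum_neg : ∑ j ∈ s, γ j • (-c j - -b) = 0 := by
    simp only [neg_sub_neg, ← neg_sub (c _) b, smul_neg, Finset.sum_neg_distrib, hsum, neg_zero]
  exact neg_injective (eq_of_sum_smul_sub_eq_zero_of_le (c := fun j => -c j) hγ
    (fun j hj => neg_le_neg (hb j hj)) hsum_neg hi hγi)

end OrderedModule

section Indicator

variable {α ι R : Type*} [Ring R] [PartialOrder R] [IsStrictOrderedRing R]
  {A B : Set α} {C : ι → Set α} {s : Finset ι} {γ : ι → R} {i : ι}

/-- Where `A` and `B` agree the combination vanishes, and there the value of `B`, being `0` or `1`,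
is an extreme value of an indicator, so all terms of the sum have the same sign. -/
theorem mem_iff_mem_of_indicator_sub_eq_sum (hγ : ∀ j ∈ s, 0 ≤ γ j)
    (heq : A.indicator (1 : α → R) - B.indicator 1 =
      ∑ j ∈ s, γ j • ((C j).indicator (1 : α → R) - B.indicator 1))
    (hi : i ∈ s) (hγi : 0 < γ i) {x : α} (hx : x ∈ A ↔ x ∈ B) : x ∈ C i ↔ x ∈ B := by
  have indicator_nonneg (S : Set α) : (0 : R) ≤ S.indicator 1 x :=
    Set.indicator_nonneg (fun _ _ => zero_le_one) x
  have indicator_le_one (S : Set α) : S.indicator 1 x ≤ (1 : R) :=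
    Set.indicator_le_self' (fun _ _ => zero_le_one) x
  have hAB : A.indicator (1 : α → R) x = B.indicator 1 x :=
    Set.indicator_eq_indicator hx rfl
  have hsum : ∑ j ∈ s, γ j • ((C j).indicator 1 x - B.indicator 1 x : R) = 0 := by
    simpa only [Pi.sub_apply, Finset.sum_apply, Pi.smul_apply, hAB, sub_self, eq_comm]
      using congrFun heq x
  by_cases hB : x ∈ B
  · simp only [Set.indicator_of_mem hB, Pi.one_apply] at hsum
    have hC := eq_of_sum_smul_sub_eq_zero_of_ge hγ (fun j _ => indicator_le_one (C j)) hsum hi hγi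
    exact iff_of_true ((Set.indicator_eq_one_iff_mem R).1 hC) hB
  · simp only [Set.indicator_of_notMem hB] at hsum
    have hC := eq_of_sum_smul_sub_eq_zero_of_le hγ (fun j _ => indicator_nonneg (C j)) hsum hi hγi
    exact iff_of_false ((Set.indicator_eq_zero_iff_notMem R).1 hC) hB

theorem sandwich_lemma_general (hγ : ∀ j ∈ s, 0 ≤ γ j)
    (heq : A.indicator (1 : α → R) - B.indicator 1 =
      ∑ j ∈ s, γ j • ((C j).indicator (1 : α → R) - B.indicator 1))
    (hi : i ∈ s) (hγi : 0 < γ i) : A ∩ B ⊆ C i ∧ C i ⊆ A ∪ B := by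
  have agree {x : α} (hx : x ∈ A ↔ x ∈ B) : x ∈ C i ↔ x ∈ B :=
    mem_iff_mem_of_indicator_sub_eq_sum hγ heq hi hγi hx
  constructor
  · rintro x ⟨hA, hB⟩
    exact (agree (iff_of_true hA hB)).2 hB
  · intro x hC
    by_contra hx
    obtain ⟨hA, hB⟩ := not_or.1 hx
    exact hB ((agree (iff_of_false hA hB)).1 hC)

end Indicator

theorem indVec_eq_indicator {α : Type*} [DecidableEq α] (A : Finset α) :
    indVec A = (A : Set α).indicator 1 := by
  ext x
  simp only [indVec, Set.indicator_apply, Finset.mem_coe, Pi.one_apply]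

/-- If `e_A, e_B, e_{C₁}, …, e_{C_k}` are pairwise distinct and
`e_A - e_B = ∑ᵢ γᵢ (e_{Cᵢ} - e_B)` with all `γᵢ > 0`, then `A ∩ B ⊆ Cᵢ ⊆ A ∪ B`
for every `i`. -/
theorem sandwich_lemma (k : ℕ) (A B : Finset X) (C : Fin k → Finset X) (γ : Fin k → ℝ)
    (hAB : indVec A ≠ indVec B)
    (hCA : ∀ i, indVec (C i) ≠ indVec A)
    (hCB : ∀ i, indVec (C i) ≠ indVec B)
    (hCC : ∀ i j, i ≠ j → indVec (C i) ≠ indVec (C j))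
    (hγ : ∀ i, 0 < γ i)
    (heq : indVec A - indVec B = ∑ i, γ i • (indVec (C i) - indVec B)) :
    ∀ i, A ∩ B ⊆ C i ∧ C i ⊆ A ∪ B := by
  simp only [indVec_eq_indicator] at heq
  exact fun i => mod_cast
    sandwich_lemma_general (fun j _ => (hγ j).le) heq (Finset.mem_univ i) (hγ i)
end

section
/- Let M be a matroid on a finite ground set X and let P_M be the convex hull in ℝ^X of the indicator vectors of the independent sets of M. Let A and B be distinct independent sets of M. Then e_A and e_B form an edge of P_M (i.e., the segment [e_A, e_B] is a face of P_M) if and only if for all independent sets C, D of M, the equality e_A + e_B = e_C + e_D implies {A, B} = {C, D}. -/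
/-!
If `[e_A, e_B]` is a face and `e_A + e_B = e_C + e_D`, then the midpoint of `e_C` and `e_D` lies on
this segment, hence so do `e_C` and `e_D`; being vertices of the unit cube, they are endpoints.

Conversely, let `e_A + e_B` decompose in only one way. Moving an element from one set to the other
preserves `e_A + e_B`, and so does exchanging two elements. If one of `A`, `B` can be augmented from
the other, uniqueness forces the two sets to differ by this one element. Otherwise both are bases of
`A ∪ B`, and uniqueness applied to a symmetric exchange forces them to differ by this one swap. The
segment is then the face of the polytope on which `e_{A ∩ B} ≤ x ≤ e_{A ∪ B}` and, in the case of a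
swap, the coordinate sum over `A ∪ B` is maximal.
-/

variable {X : Type*} [Fintype X] [DecidableEq X]

open Set
open scoped Matroid

section Faces

variable {𝕜 E : Type*}

theorem isExtreme_convexHull_inter [Semiring 𝕜] [PartialOrder 𝕜] [ZeroLEOneClass 𝕜]
    [AddCommMonoid E] [Module 𝕜 E] {K F s : Set E}
    (hK : Convex 𝕜 K) (hF : Convex 𝕜 F) (hKF : IsExtreme 𝕜 K F) (hs : s ⊆ K) :
    IsExtreme 𝕜 (convexHull 𝕜 s) (convexHull 𝕜 (s ∩ F)) := by
  have hull_subset : convexHull 𝕜 s ⊆ {x | x ∈ K ∧ (x ∈ F → x ∈ convexHull 𝕜 (s ∩ F))} := by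
    refine convexHull_min (fun x hx ↦ ⟨hs hx, fun hxF ↦ subset_convexHull 𝕜 _ ⟨hx, hxF⟩⟩) ?_
    refine convex_iff_openSegment_subset.2 fun x ⟨hxK, hx⟩ y ⟨hyK, hy⟩ z hz ↦
      ⟨hK.openSegment_subset hxK hyK hz, fun hzF ↦ ?_⟩
    have hxF : x ∈ F := hKF.left_mem_of_mem_openSegment hxK hyK hzF hz
    have hyF : y ∈ F := hKF.right_mem_of_mem_openSegment hxK hyK hzF hz
    exact (convex_convexHull 𝕜 _).openSegment_subset (hx hxF) (hy hyF) hz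
  refine ⟨convexHull_mono inter_subset_left, fun x hx y hy z hz hzxy ↦ (hull_subset hx).2 ?_⟩
  exact hKF.left_mem_of_mem_openSegment (hull_subset hx).1 (hull_subset hy).1
    (convexHull_min inter_subset_right hF hz) hzxy

theorem isExtreme_halfSpace_hyperplane [Ring 𝕜] [LinearOrder 𝕜] [IsStrictOrderedRing 𝕜]
    [AddCommMonoid E] [Module 𝕜 E] (f : E →ₗ[𝕜] 𝕜) (c : 𝕜) :
    IsExtreme 𝕜 {x | f x ≤ c} {x | f x = c} := by
  refine ⟨fun x hx ↦ le_of_eq hx, fun x hx y hy z hz ⟨s, t, hs, ht, hst, hxyz⟩ ↦ ?_⟩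
  refine le_antisymm hx (not_lt.1 fun hlt ↦ ?_)
  have hsum : s * f x + t * f y = s * c + t * c := by
    rw [← add_mul, hst, one_mul, ← hz.out, ← hxyz, map_add, map_smul, map_smul, smul_eq_mul,
      smul_eq_mul]
  exact (add_lt_add_of_lt_of_le (mul_lt_mul_of_pos_left hlt hs)
    (mul_le_mul_of_nonneg_left hy.out ht.le)).ne hsum

theorem mem_of_isExtreme_of_add_eq_add [Ring 𝕜] [LinearOrder 𝕜] [IsStrictOrderedRing 𝕜]
    [Invertible (2 : 𝕜)] [AddCommGroup E] [Module 𝕜 E] {P S : Set E} {a b c d : E}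
    (hS : IsExtreme 𝕜 P S) (hconv : Convex 𝕜 S) (ha : a ∈ S) (hb : b ∈ S) (hc : c ∈ P) (hd : d ∈ P)
    (h : a + b = c + d) : c ∈ S := by
  have hmid : midpoint 𝕜 c d = midpoint 𝕜 a b := by simp only [midpoint_eq_smul_add, h]
  refine hS.left_mem_of_mem_openSegment hc hd (hconv.midpoint_mem ha hb) ?_
  rw [← hmid]
  exact midpoint_mem_openSegment c d

end Faces

section IndicatorVectors

variable {α : Type*} [DecidableEq α] {A B C D I U : Finset α}

theorem indVec_le_indVec_iff : indVec A ≤ indVec B ↔ A ⊆ B := by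
  refine forall_congr' fun x ↦ ?_
  by_cases hA : x ∈ A <;> by_cases hB : x ∈ B <;> simp [indVec, hA, hB]

theorem indVec_injective : Function.Injective (indVec : Finset α → α → ℝ) := fun _ _ h ↦
  (indVec_le_indVec_iff.1 h.le).antisymm (indVec_le_indVec_iff.1 h.ge)

theorem indVec_mem_Icc_zero_one (A : Finset α) : indVec A ∈ Icc (0 : α → ℝ) 1 := by
  constructor <;> intro x <;> by_cases hx : x ∈ A <;> simp [indVec, hx]

theorem indVec_union_add_indVec_inter (A B : Finset α) :
    indVec (A ∪ B) + indVec (A ∩ B) = indVec A + indVec B := by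
  ext x
  by_cases hA : x ∈ A <;> by_cases hB : x ∈ B <;> simp [indVec, hA, hB]

theorem sum_indVec (U A : Finset α) : ∑ x ∈ U, indVec A x = (U ∩ A).card := by
  simp [indVec, Finset.sum_ite_mem]

theorem isExtreme_Icc_indVec (I U : Finset α) :
    IsExtreme ℝ (Icc (0 : α → ℝ) 1) (Icc (indVec I) (indVec U)) := by
  refine ⟨Icc_subset_Icc (indVec_mem_Icc_zero_one I).1 (indVec_mem_Icc_zero_one U).2, ?_⟩
  rintro x ⟨hx0, hx1⟩ y ⟨hy0, hy1⟩ _ ⟨hIz, hzU⟩ ⟨s, t, hs, ht, hst, rfl⟩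
  refine ⟨fun i ↦ ?_, fun i ↦ ?_⟩
  · by_cases hi : i ∈ I
    · have hz : 1 ≤ s * x i + t * y i := by simpa [indVec, hi] using hIz i
      have hy : y i ≤ 1 := hy1 i
      simp only [indVec, hi, if_true]
      nlinarith
    · simpa [indVec, hi] using hx0 i
  · by_cases hi : i ∈ U
    · simpa [indVec, hi] using hx1 i
    · have hz : s * x i + t * y i ≤ 0 := by simpa [indVec, hi] using hzU i
      have hy : 0 ≤ y i := hy0 i
      simp only [indVec, hi, if_false]
      nlinarith

theorem indVec_mem_extremePoints_Icc (A : Finset α) :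
    indVec A ∈ (Icc (0 : α → ℝ) 1).extremePoints ℝ := by
  simpa only [Icc_self, isExtreme_singleton] using isExtreme_Icc_indVec A A

/-- The 0/1-polytope spanned by the indicator vectors of the members of a family `F` of finite
sets; the independence polytope of a matroid is the case of its finite independent sets. -/
def indVecPolytope (F : Set (Finset α)) : Set (α → ℝ) := convexHull ℝ (indVec '' F)

variable {F : Set (Finset α)}

theorem indVecPolytope_pair (A B : Finset α) :
    indVecPolytope {A, B} = segment ℝ (indVec A) (indVec B) := by
  rw [indVecPolytope, image_pair, convexHull_pair]

theorem indVecPolytope_subset_Icc (F : Set (Finset α)) : indVecPolytope F ⊆ Icc 0 1 :=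
  convexHull_min (image_subset_iff.2 fun A _ ↦ indVec_mem_Icc_zero_one A) (convex_Icc 0 1)

theorem indVec_mem_indVecPolytope_iff : indVec A ∈ indVecPolytope F ↔ A ∈ F := by
  refine ⟨fun h ↦ ?_, fun h ↦ subset_convexHull ℝ _ (mem_image_of_mem _ h)⟩
  rw [← indVec_injective.mem_set_image]
  exact extremePoints_convexHull_subset <| inter_extremePoints_subset_extremePoints_of_subset
    (indVecPolytope_subset_Icc F) ⟨h, indVec_mem_extremePoints_Icc A⟩

theorem isExtreme_indVecPolytope_inter_Icc (F : Set (Finset α)) (I U : Finset α) :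
    IsExtreme ℝ (indVecPolytope F) (indVecPolytope (F ∩ Icc I U)) := by
  have hpre : Icc I U = indVec ⁻¹' Icc (indVec I) (indVec U) := by
    ext C
    simp only [mem_Icc, mem_preimage, indVec_le_indVec_iff]
  rw [indVecPolytope, indVecPolytope, hpre, image_inter_preimage]
  exact isExtreme_convexHull_inter (convex_Icc 0 1) (convex_Icc _ _) (isExtreme_Icc_indVec I U)
    (image_subset_iff.2 fun A _ ↦ indVec_mem_Icc_zero_one A)

theorem isExtreme_indVecPolytope_card_inter_eq (U : Finset α) (k : ℕ)
    (hF : ∀ C ∈ F, (U ∩ C).card ≤ k) :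
    IsExtreme ℝ (indVecPolytope F) (indVecPolytope {C ∈ F | (U ∩ C).card = k}) := by
  let f : (α → ℝ) →ₗ[ℝ] ℝ := ∑ x ∈ U, LinearMap.proj x
  have hf (C : Finset α) : f (indVec C) = (U ∩ C).card := by
    simp only [f, LinearMap.sum_apply, LinearMap.proj_apply, sum_indVec]
  have hpre : {C ∈ F | (U ∩ C).card = k} = F ∩ indVec ⁻¹' {x | f x = k} := by
    ext C
    simp [hf]
  rw [indVecPolytope, indVecPolytope, hpre, image_inter_preimage]
  refine isExtreme_convexHull_inter (convex_halfSpace_le f.isLinear k)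
    (convex_hyperplane f.isLinear k) (isExtreme_halfSpace_hyperplane f k) ?_
  rintro _ ⟨C, hC, rfl⟩
  simpa only [mem_ofPred_eq, hf, Nat.cast_le] using hF C hC

theorem isExtreme_segment_of_covBy (hA : A ∈ F) (hB : B ∈ F) (hAB : A ⋖ B) :
    IsExtreme ℝ (indVecPolytope F) (segment ℝ (indVec A) (indVec B)) := by
  have hIcc : F ∩ Icc A B = {A, B} := by
    rw [hAB.Icc_eq, inter_eq_right]
    exact pair_subset hA hB
  rw [← indVecPolytope_pair, ← hIcc]
  exact isExtreme_indVecPolytope_inter_Icc F A B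

theorem card_eq_card_of_inter_covBy (hIA : A ∩ B ⋖ A) (hIB : A ∩ B ⋖ B) : A.card = B.card :=
  (Order.succ_eq_of_covBy hIA.card_finset).symm.trans (Order.succ_eq_of_covBy hIB.card_finset)

theorem card_union_of_inter_covBy (hIA : A ∩ B ⋖ A) (hIB : A ∩ B ⋖ B) :
    (A ∪ B).card = A.card + 1 := by
  have hA : (A ∩ B).card + 1 = A.card := Order.succ_eq_of_covBy hIA.card_finset
  have hB : (A ∩ B).card + 1 = B.card := Order.succ_eq_of_covBy hIB.card_finset
  have := Finset.card_union_add_card_inter A B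
  omega

theorem eq_or_eq_of_inter_covBy_of_card_eq (hIA : A ∩ B ⋖ A) (hIB : A ∩ B ⋖ B)
    (hC : C ∈ Icc (A ∩ B) (A ∪ B)) (hcard : C.card = A.card) : C = A ∨ C = B := by
  have hcardB : C.card = B.card := hcard.trans (card_eq_card_of_inter_covBy hIA hIB)
  have hCA := hIA.eq_or_eq (Finset.subset_inter hC.1 Finset.inter_subset_left)
    Finset.inter_subset_right
  have hCB := hIB.eq_or_eq (Finset.subset_inter hC.1 Finset.inter_subset_right)
    Finset.inter_subset_right
  obtain hCA | hCA := hCA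
  · obtain hCB | hCB := hCB
    · have hCI : C = A ∩ B := by
        rw [← Finset.inter_eq_left.2 hC.2, Finset.inter_union_distrib_left, hCA, hCB,
          Finset.union_self]
      exact absurd hcard (hCI ▸ hIA.card_finset.lt.ne)
    · exact Or.inr (Finset.eq_of_subset_of_card_le (Finset.inter_eq_right.1 hCB) hcardB.le).symm
  · exact Or.inl (Finset.eq_of_subset_of_card_le (Finset.inter_eq_right.1 hCA) hcard.le).symm

theorem isExtreme_segment_of_inter_covBy (hA : A ∈ F) (hB : B ∈ F) (hIA : A ∩ B ⋖ A)
    (hIB : A ∩ B ⋖ B) (hU : A ∪ B ∉ F) :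
    IsExtreme ℝ (indVecPolytope F) (segment ℝ (indVec A) (indVec B)) := by
  have hcard : ∀ C ∈ F ∩ Icc (A ∩ B) (A ∪ B), ((A ∪ B) ∩ C).card ≤ A.card := by
    rintro C ⟨hC, -, hCU⟩
    have hlt : C.card < (A ∪ B).card :=
      Finset.card_lt_card (hCU.ssubset_of_ne (ne_of_mem_of_not_mem hC hU))
    rw [Finset.inter_eq_right.2 hCU]
    have := card_union_of_inter_covBy hIA hIB
    omega
  have hmax : {C ∈ F ∩ Icc (A ∩ B) (A ∪ B) | ((A ∪ B) ∩ C).card = A.card} = {A, B} := by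
    ext C
    constructor
    · rintro ⟨⟨-, hC⟩, hCA⟩
      rw [Finset.inter_eq_right.2 hC.2] at hCA
      exact eq_or_eq_of_inter_covBy_of_card_eq hIA hIB hC hCA
    · rintro (rfl | rfl)
      · exact ⟨⟨hA, Finset.inter_subset_left, Finset.subset_union_left⟩, by simp⟩
      · exact ⟨⟨hB, Finset.inter_subset_right, Finset.subset_union_right⟩,
          by simpa using (card_eq_card_of_inter_covBy hIA hIB).symm⟩
  rw [← indVecPolytope_pair, ← hmax]
  exact (isExtreme_indVecPolytope_inter_Icc F _ _).trans
    (isExtreme_indVecPolytope_card_inter_eq (A ∪ B) A.card hcard)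

/-- The vector `e_A + e_B` has no decomposition as `e_C + e_D` with `C` and `D` in `F` other than
`{C, D} = {A, B}`. -/
def HasUniqueSum (F : Set (Finset α)) (A B : Finset α) : Prop :=
  ∀ C D : Finset α, C ∈ F → D ∈ F → indVec A + indVec B = indVec C + indVec D →
    ({A, B} : Set (Finset α)) = {C, D}

theorem HasUniqueSum.symm (h : HasUniqueSum F A B) : HasUniqueSum F B A := fun C D hC hD hsum ↦
  (pair_comm B A).trans (h C D hC hD ((add_comm _ _).trans hsum))

theorem HasUniqueSum.pair_eq_of_union_inter_eq (h : HasUniqueSum F A B) (hC : C ∈ F) (hD : D ∈ F)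
    (hunion : A ∪ B = C ∪ D) (hinter : A ∩ B = C ∩ D) : ({A, B} : Set (Finset α)) = {C, D} := by
  refine h C D hC hD ?_
  rw [← indVec_union_add_indVec_inter, hunion, hinter, indVec_union_add_indVec_inter]

theorem hasUniqueSum_of_isExtreme_segment
    (hF : IsExtreme ℝ (indVecPolytope F) (segment ℝ (indVec A) (indVec B))) :
    HasUniqueSum F A B := by
  intro C D hC hD h
  have hCAB : C ∈ ({A, B} : Set (Finset α)) := by
    rw [← indVec_mem_indVecPolytope_iff, indVecPolytope_pair]
    exact mem_of_isExtreme_of_add_eq_add hF (convex_segment _ _) (left_mem_segment ℝ _ _)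
      (right_mem_segment ℝ _ _) (indVec_mem_indVecPolytope_iff.2 hC)
      (indVec_mem_indVecPolytope_iff.2 hD) h
  obtain rfl | rfl := hCAB
  · rw [indVec_injective (add_left_cancel h)]
  · rw [add_comm] at h
    rw [indVec_injective (add_left_cancel h), pair_comm]

end IndicatorVectors

section Exchange

variable {α : Type*} {M : Matroid α}

theorem isBase_insert_sdiff_singleton_of_mem_fundCircuit {B : Set α} {e f : α} (hB : M.IsBase B)
    (he : e ∈ M.E) (heB : e ∉ B) (hf : f ∈ B) (hfe : f ∈ M.fundCircuit e B) :
    M.IsBase (insert e (B \ {f})) := by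
  refine hB.exchange_isBase_of_indep heB ?_
  rw [insert_sdiff_singleton_comm (ne_of_mem_of_not_mem hf heB).symm]
  exact (hB.indep.mem_fundCircuit_iff (hB.closure_eq ▸ he) heB).1 hfe

/-- A circuit and a cocircuit never meet in exactly one element, so the fundamental circuit of `a`
for `B` and the fundamental cocircuit of `a` for `A` share a second element. -/
theorem exists_isBase_symm_exchange {A B : Set α} {a : α} (hA : M.IsBase A) (hB : M.IsBase B)
    (ha : a ∈ A \ B) :
    ∃ b ∈ B \ A, M.IsBase (insert b (A \ {a})) ∧ M.IsBase (insert a (B \ {b})) := by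
  have haE : a ∈ M.E := hA.subset_ground ha.1
  obtain ⟨b, ⟨hbC, hbK⟩, hba⟩ :=
    ((hB.fundCircuit_isCircuit haE ha.2).isCocircuit_inter_nontrivial
      (M.fundCocircuit_isCocircuit ha.1 hA)
      ⟨a, M.mem_fundCircuit a B, M.mem_fundCocircuit a A⟩).exists_ne a
  have hbB : b ∈ B := (M.fundCircuit_subset_insert a B hbC).resolve_left hba
  have hbA : b ∈ M.E \ A := (M.fundCocircuit_subset_insert_compl a A hbK).resolve_left hba
  exact ⟨b, ⟨hbB, hbA.2⟩,
    isBase_insert_sdiff_singleton_of_mem_fundCircuit hA hbA.1 hbA.2 ha.1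
      (hA.mem_fundCocircuit_iff_mem_fundCircuit.1 hbK),
    isBase_insert_sdiff_singleton_of_mem_fundCircuit hB haE ha.2 hbB hbC⟩

/-- The finite independent sets of a matroid, to which the polytope and the uniqueness of sums
of indicator vectors are applied. -/
def finiteIndepSets (M : Matroid α) : Set (Finset α) := {C | M.Indep C}

variable [DecidableEq α] {A B : Finset α}

theorem HasUniqueSum.covBy_of_insert_mem {F : Set (Finset α)} (h : HasUniqueSum F A B)
    {b : α} (hbB : b ∈ B) (hbA : b ∉ A) (hA : insert b A ∈ F) (hB : B.erase b ∈ F) : A ⋖ B := by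
  have hpair := h.pair_eq_of_union_inter_eq hA hB (by grind) (by grind)
  have hBmem : B ∈ ({insert b A, B.erase b} : Set (Finset α)) := hpair ▸ mem_insert_of_mem A rfl
  obtain hBA | hBB := hBmem
  · exact hBA ▸ Finset.covBy_insert hbA
  · exact absurd (hBB ▸ hbB) (Finset.notMem_erase b B)

theorem HasUniqueSum.inter_covBy_of_swap_mem {F : Set (Finset α)} (h : HasUniqueSum F A B)
    {a b : α} (haA : a ∈ A) (haB : a ∉ B) (hbB : b ∈ B) (hbA : b ∉ A)
    (hA : insert b (A.erase a) ∈ F) (hB : insert a (B.erase b) ∈ F) :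
    A ∩ B ⋖ A ∧ A ∩ B ⋖ B := by
  have hpair := h.pair_eq_of_union_inter_eq hA hB (by grind) (by grind)
  have hBmem : B ∈ ({insert b (A.erase a), insert a (B.erase b)} : Set (Finset α)) :=
    hpair ▸ mem_insert_of_mem A rfl
  have hBA : B = insert b (A.erase a) :=
    hBmem.resolve_right fun hBB ↦ haB (hBB ▸ Finset.mem_insert_self a _)
  have hIA : A ∩ B = A.erase a := by grind
  have hIB : A ∩ B = B.erase b := by grind
  exact ⟨Finset.covBy_iff_exists_erase.2 ⟨a, haA, hIA.symm⟩,
    Finset.covBy_iff_exists_erase.2 ⟨b, hbB, hIB.symm⟩⟩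

theorem isBase_restrict_union_or_exists_insert_indep (hA : M.Indep A) (hB : M.Indep B) :
    (M ↾ ↑(A ∪ B)).IsBase A ∨ ∃ b ∈ B \ A, M.Indep ↑(insert b A) := by
  refine or_iff_not_imp_right.2 fun hmax ↦ ?_
  push Not at hmax
  refine (hA.isBasis_of_forall_insert (by simp) fun e he ↦ ⟨?_, ?_⟩).isBase_restrict
  · simpa using hmax e (by simpa using he)
  · exact insert_subset ((by simpa using he.1 : e ∈ A ∨ e ∈ B).elim
      (hA.subset_ground ·) (hB.subset_ground ·)) hA.subset_ground

theorem HasUniqueSum.covBy_or_inter_covBy (h : HasUniqueSum (finiteIndepSets M) A B)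
    (hA : M.Indep A) (hB : M.Indep B) (hAB : A ≠ B) :
    A ⋖ B ∨ B ⋖ A ∨ A ∩ B ⋖ A ∧ A ∩ B ⋖ B ∧ ¬ M.Indep ↑(A ∪ B) := by
  obtain hbaseA | ⟨b, hb, hbA⟩ := isBase_restrict_union_or_exists_insert_indep hA hB
  swap
  · obtain ⟨hbB, hb⟩ := Finset.mem_sdiff.1 hb
    exact Or.inl (h.covBy_of_insert_mem hbB hb hbA
      (hB.subset (Finset.coe_subset.2 (Finset.erase_subset b B))))
  obtain hbaseB | ⟨a, ha, haB⟩ := isBase_restrict_union_or_exists_insert_indep hB hA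
  swap
  · obtain ⟨haA, ha⟩ := Finset.mem_sdiff.1 ha
    exact Or.inr (Or.inl (h.symm.covBy_of_insert_mem haA ha haB
      (hA.subset (Finset.coe_subset.2 (Finset.erase_subset a A)))))
  rw [Finset.union_comm] at hbaseB
  obtain ⟨a, haA, haB⟩ : ∃ a ∈ A, a ∉ B := Finset.not_subset.1 fun hsub ↦
    hAB (Finset.coe_injective (hbaseA.eq_of_subset_isBase hbaseB (Finset.coe_subset.2 hsub)))
  obtain ⟨b, ⟨hbB, hbA⟩, hbaseA', hbaseB'⟩ := exists_isBase_symm_exchange hbaseA hbaseB ⟨haA, haB⟩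
  have hAswap : insert b (A.erase a) ∈ finiteIndepSets M := by
    simpa [finiteIndepSets] using hbaseA'.indep.of_restrict
  have hBswap : insert a (B.erase b) ∈ finiteIndepSets M := by
    simpa [finiteIndepSets] using hbaseB'.indep.of_restrict
  obtain ⟨hIA, hIB⟩ := h.inter_covBy_of_swap_mem haA haB hbB hbA hAswap hBswap
  refine Or.inr (Or.inr ⟨hIA, hIB, fun hU ↦ ?_⟩)
  have hAU : A = A ∪ B := Finset.coe_injective
    (hbaseA.eq_of_subset_indep (hU.indep_restrict_of_subset Subset.rfl) (by simp))
  exact hbA (hAU ▸ Finset.mem_union_right A hbB)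

theorem HasUniqueSum.isExtreme_segment (h : HasUniqueSum (finiteIndepSets M) A B)
    (hA : M.Indep A) (hB : M.Indep B) :
    IsExtreme ℝ (indVecPolytope (finiteIndepSets M)) (segment ℝ (indVec A) (indVec B)) := by
  obtain rfl | hAB := eq_or_ne A B
  · rw [segment_same, isExtreme_singleton]
    exact inter_extremePoints_subset_extremePoints_of_subset (indVecPolytope_subset_Icc _)
      ⟨indVec_mem_indVecPolytope_iff.2 hA, indVec_mem_extremePoints_Icc A⟩
  obtain hcov | hcov | ⟨hIA, hIB, hU⟩ := h.covBy_or_inter_covBy hA hB hAB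
  · exact isExtreme_segment_of_covBy hA hB hcov
  · rw [segment_symm]
    exact isExtreme_segment_of_covBy hB hA hcov
  · exact isExtreme_segment_of_inter_covBy hA hB hIA hIB hU

theorem exists_matroid_indep_iff (Indep : Finset α → Prop) (h_empty : Indep ∅)
    (h_subset : ∀ A B : Finset α, B ⊆ A → Indep A → Indep B)
    (h_exchange : ∀ A B : Finset α, Indep A → Indep B → A.card < B.card →
      ∃ b ∈ B \ A, Indep (insert b A)) :
    ∃ M : Matroid α, ∀ I : Finset α, M.Indep I ↔ Indep I := by
  have h_augment : ∀ ⦃A B : Finset α⦄, Indep A → Indep B → A.card < B.card →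
      ∃ b ∈ B, b ∉ A ∧ Indep (insert b A) := by
    simpa only [Finset.mem_sdiff, and_assoc] using h_exchange
  have h_down : ∀ ⦃I J : Finset α⦄, Indep J → I ⊆ J → Indep I := fun I J hJ hIJ ↦
    h_subset J I hIJ hJ
  exact ⟨(IndepMatroid.ofFinset univ Indep h_empty h_down h_augment
      fun _ _ ↦ subset_univ _).matroid,
    fun I ↦ IndepMatroid.ofFinset_indep univ Indep h_empty h_down h_augment
      fun _ _ ↦ subset_univ _⟩

end Exchange

theorem edge_matroid_polytope_iff_general {α : Type*} [DecidableEq α] (M : Matroid α)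
    (A B : Finset α) (hA : M.Indep A) (hB : M.Indep B) :
    IsExtreme ℝ (convexHull ℝ {x | ∃ C : Finset α, M.Indep C ∧ x = indVec C})
        (segment ℝ (indVec A) (indVec B)) ↔
      ∀ C D : Finset α, M.Indep C → M.Indep D →
        indVec A + indVec B = indVec C + indVec D →
          ({A, B} : Set (Finset α)) = {C, D} := by
  have hpoly : {x | ∃ C : Finset α, M.Indep C ∧ x = indVec C} = indVec '' finiteIndepSets M := by
    ext x
    simp only [mem_ofPred_eq, mem_image, finiteIndepSets, eq_comm]
  rw [hpoly]
  exact ⟨hasUniqueSum_of_isExtreme_segment, fun h ↦ HasUniqueSum.isExtreme_segment h hA hB⟩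

/-- Two distinct vertices `e_A`, `e_B` of the independence polytope of a matroid form an
edge iff `e_A + e_B` has a unique decomposition as a sum of two vertices. The matroid is
given by its independence predicate `Indep`, which contains `∅`, is closed under taking
subsets, and satisfies the exchange axiom. -/
theorem edge_matroid_polytope_iff (Indep : Finset X → Prop)
    (h_empty : Indep ∅)
    (h_subset : ∀ A B : Finset X, B ⊆ A → Indep A → Indep B)
    (h_exchange : ∀ A B : Finset X, Indep A → Indep B → A.card < B.card →
      ∃ b ∈ B \ A, Indep (insert b A))
    (A B : Finset X) (hA : Indep A) (hB : Indep B) (hAB : A ≠ B) :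
    IsExtreme ℝ (convexHull ℝ {x | ∃ C : Finset X, Indep C ∧ x = indVec C})
        (segment ℝ (indVec A) (indVec B)) ↔
      ∀ C D : Finset X, Indep C → Indep D →
        indVec A + indVec B = indVec C + indVec D →
          ({A, B} : Set (Finset X)) = {C, D} := by
  obtain ⟨M, hM⟩ := exists_matroid_indep_iff Indep h_empty h_subset h_exchange
  simpa only [hM] using edge_matroid_polytope_iff_general M A B ((hM A).2 hA) ((hM B).2 hB)
end
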